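/- Let P be a finite set of points in the Euclidean plane such that all pairwise distances between distinct points of P are distinct (so the Euclidean minimum spanning tree T' of P is unique), and let F be a set of unordered pairs of distinct points of P. Let T be any spanning tree of the complete graph on P that minimizes the total F-weight, where the F-weight of a pair {u,v} is 0 if {u,v} ∈ F and the Euclidean distance between u and v otherwise. Then every edge of T belongs to F or is an edge of T'. -/

import Mathlib

noncomputable section

/-- Points in the Euclidean plane. -/
abbrev Pt : Type := EuclideanSpace ℝ (Fin 2)

noncomputable instance : DecidableEq Pt := Classical.decEq _

/-- Length of an edge (an unordered pair of points): the Euclidean distance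
between its endpoints. -/
def edgeLen : Sym2 Pt → ℝ := Sym2.lift ⟨fun u v => dist u v, fun u v => dist_comm u v⟩

/-- Total length of a graph given by its finite edge set: the sum of the Euclidean
lengths of its edges. -/
def graphLength (E : Finset (Sym2 Pt)) : ℝ := ∑ e ∈ E, edgeLen e

/-- Closed straight-line segment joining the endpoints of an edge. -/
def edgeSeg : Sym2 Pt → Set Pt :=
  Sym2.lift ⟨fun u v => segment ℝ u v, fun u v => segment_symm ℝ u v⟩

/-- The edges in `E` are unordered pairs of distinct points of `V`. -/
def EdgesOn (V : Finset Pt) (E : Finset (Sym2 Pt)) : Prop :=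
  ∀ e ∈ E, ¬ e.IsDiag ∧ ∀ p ∈ e, p ∈ V

/-- The subgraph induced by `s` of the graph with edge set `E` is connected. -/
def InducedConnected (E : Finset (Sym2 Pt)) (s : Finset Pt) : Prop :=
  ((SimpleGraph.fromEdgeSet (↑E : Set (Sym2 Pt))).induce (↑s : Set Pt)).Connected

/-- The graph with edge set `E` is a tree (connected and acyclic) on vertex set `V`. -/
def IsTreeOn (V : Finset Pt) (E : Finset (Sym2 Pt)) : Prop :=
  ((SimpleGraph.fromEdgeSet (↑E : Set (Sym2 Pt))).induce (↑V : Set Pt)).IsTree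

/-- The straight-line drawing of the graph with edge set `E` is plane: the closed
straight-line segments of any two distinct edges intersect only in points that are
endpoints of both edges. -/
def IsPlane (E : Finset (Sym2 Pt)) : Prop :=
  ∀ e ∈ E, ∀ f ∈ E, e ≠ f → ∀ x ∈ edgeSeg e ∩ edgeSeg f, x ∈ e ∧ x ∈ f

/-- `T` is a Euclidean minimum spanning tree of the point set `P`: a spanning tree of
the complete graph on `P` minimizing the total Euclidean edge length. -/
def IsEMST (P : Finset Pt) (T : Finset (Sym2 Pt)) : Prop :=
  EdgesOn P T ∧ IsTreeOn P T ∧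
    ∀ T' : Finset (Sym2 Pt), EdgesOn P T' → IsTreeOn P T' → graphLength T ≤ graphLength T'

/-- Total `F`-weight of edge set `E`: edges in `F` have weight `0`, all other edges
their Euclidean length. -/
def fWeight (F E : Finset (Sym2 Pt)) : ℝ := ∑ e ∈ E, if e ∈ F then 0 else edgeLen e

/-- `T` is an `F`-minimum spanning tree of `P`: a spanning tree of the complete graph
on `P` minimizing the total `F`-weight. -/
def IsFMST (F : Finset (Sym2 Pt)) (P : Finset Pt) (T : Finset (Sym2 Pt)) : Prop :=
  EdgesOn P T ∧ IsTreeOn P T ∧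
    ∀ T' : Finset (Sym2 Pt), EdgesOn P T' → IsTreeOn P T' → fWeight F T ≤ fWeight F T'

/-- All pairwise distances between distinct points of `P` are distinct: two pairs of
distinct points of `P` at equal distance must be the same unordered pair. -/
def DistinctDistances (P : Finset Pt) : Prop :=
  ∀ p ∈ P, ∀ q ∈ P, ∀ u ∈ P, ∀ v ∈ P, p ≠ q → u ≠ v →
    dist p q = dist u v → s(p, q) = s(u, v)

/-!
Let `e` be an edge of `T` outside `F` and suppose that `e` is not in `T'`. Deleting `e` from `T`
leaves two components, and the path of `T'` between the endpoints of `e` crosses from one to the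
other along some edge `f`. Exchanging `e` and `f` turns `T` and `T'` into spanning trees, so
minimality of `T` gives `w_F(e) ≤ w_F(f)` and minimality of `T'` gives `w(f) ≤ w(e)`. Since
`w_F ≤ w` (lengths are nonnegative), with equality off `F`, this forces `w(e) = w(f)`, hence `e = f`
by injectivity of `w`, contradicting `e ∉ T'`.
-/

section SimpleGraph

variable {V : Type*} {G H : SimpleGraph V} {u v x y : V} {e : Sym2 V}

theorem connected_of_forall_adj_reachable (hG : G.Connected)
    (hGH : ∀ a b, G.Adj a b → H.Reachable a b) : H.Connected := by
  have := hG.nonempty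
  refine ⟨fun a b ↦ ?_⟩
  obtain ⟨p⟩ := hG a b
  induction p with
  | nil => exact .rfl
  | cons hadj _ ih => exact (hGH _ _ hadj).trans ih

theorem isTree_deleteEdges_sup_edge_of_not_reachable (hG : G.IsTree)
    (hxy : ¬(G.deleteEdges {e}).Reachable x y) :
    (G.deleteEdges {e} ⊔ SimpleGraph.edge x y).IsTree := by
  have hne : x ≠ y := by
    rintro rfl
    exact hxy .rfl
  set H := G.deleteEdges {e} ⊔ SimpleGraph.edge x y with hH
  have hH_adj : H.Adj x y := by simp [hH, SimpleGraph.edge_adj, hne]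
  have hH_acyclic : H.IsAcyclic :=
    (hG.isAcyclic.anti (G.deleteEdges_le _)).sup_edge_of_not_reachable hxy
  have hdelete {a b : V} (hab : G.Adj a b) (hne : s(a, b) ≠ e) : (G.deleteEdges {e}).Adj a b :=
    SimpleGraph.deleteEdges_adj.2 ⟨hab, hne⟩
  refine ⟨connected_of_forall_adj_reachable hG.connected fun a b hab ↦ ?_, hH_acyclic⟩
  rcases ne_or_eq s(a, b) e with hab_ne | hab_eq
  · exact SimpleGraph.Adj.reachable (.inl (hdelete hab hab_ne))
  -- If `H` did not connect the ends of `e`, then `H` with `e` restored would be an acyclic graph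
  -- containing the tree `G`, hence equal to `G`; so `G` would have the edge `s(x, y)`, which
  -- by `hxy` can only be `e` itself, and `H` has that edge.
  by_contra hreach
  have hG_le : G ≤ H ⊔ SimpleGraph.edge a b := by
    intro c d hcd
    by_cases hcd_eq : s(c, d) = e
    · right
      rw [← SimpleGraph.mem_edgeSet, hcd_eq, ← hab_eq, SimpleGraph.mem_edgeSet]
      simp [SimpleGraph.edge_adj, hab.ne]
    · exact .inl (.inl (hdelete hcd hcd_eq))
  have hG_xy : G.Adj x y := (SimpleGraph.isTree_iff_maximal_isAcyclic.1 hG).2.2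
    (hH_acyclic.sup_edge_of_not_reachable hreach) hG_le (.inl hH_adj)
  have hxy_eq : s(x, y) = s(a, b) := by
    by_contra hne
    exact hxy (hdelete hG_xy (hab_eq ▸ hne)).reachable
  rw [← SimpleGraph.mem_edgeSet, hxy_eq] at hH_adj
  exact hreach (SimpleGraph.Adj.reachable hH_adj)

theorem not_reachable_deleteEdges_of_mem_edges (hG : G.IsAcyclic) {p : G.Walk u v} (hp : p.IsPath)
    (he : e ∈ p.edges) : ¬(G.deleteEdges {e}).Reachable u v := by
  classical
  intro hreach
  induction e using Sym2.ind with | _ x y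
  obtain ⟨q, hq⟩ := SimpleGraph.reachable_deleteEdges_iff_exists_walk.1 hreach
  have hqp : q.bypass = p :=
    congrArg Subtype.val ((hG.subsingleton_path u v).elim q.toPath ⟨p, hp⟩)
  exact hq (q.edges_bypass_subset_edges (hqp ▸ he))

theorem exists_adj_not_reachable_deleteEdges (hG : G.IsAcyclic) (huv : G.Reachable u v)
    (hH : ¬H.Reachable u v) :
    ∃ x y, G.Adj x y ∧ ¬H.Reachable x y ∧ ¬(G.deleteEdges {s(x, y)}).Reachable u v := by
  obtain ⟨p, hp⟩ := huv.exists_isPath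
  obtain ⟨d, hd, hfst, hsnd⟩ := p.exists_boundary_dart {w | H.Reachable u w} .rfl hH
  exact ⟨d.fst, d.snd, d.adj, fun h ↦ hsnd (hfst.trans h),
    not_reachable_deleteEdges_of_mem_edges hG hp (List.mem_map_of_mem hd)⟩

end SimpleGraph

section SpanningTree

variable {α : Type*} {P : Set α}

/-- The graph on vertex set `P` whose edges are the members of `E` joining two distinct points of
`P`. It lives on the subtype `P`, so that connectedness ignores points outside `P`. -/
abbrev graphOn (P : Set α) (E : Set (Sym2 α)) : SimpleGraph P :=
  (SimpleGraph.fromEdgeSet E).induce P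

/-- The edges of the complete graph on `P`, as unordered pairs in the ambient type. -/
def completeEdges (P : Set α) : Set (Sym2 α) :=
  {e | ¬e.IsDiag ∧ ∀ p ∈ e, p ∈ P}

/-- `E` is the edge set of a spanning tree of the complete graph on `P`. -/
structure IsSpanningTree (P : Set α) (E : Finset (Sym2 α)) : Prop where
  subset_completeEdges : ↑E ⊆ completeEdges P
  isTree : (graphOn P ↑E).IsTree

theorem graphOn_adj {E : Set (Sym2 α)} {u v : P} :
    (graphOn P E).Adj u v ↔ s(u.1, v.1) ∈ E ∧ u ≠ v := by
  simp [Subtype.ext_iff]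

theorem mk_mem_completeEdges {u v : P} (huv : u ≠ v) : s(u.1, v.1) ∈ completeEdges P :=
  ⟨by simpa [Subtype.ext_iff] using huv, by simp⟩

theorem graphOn_insert_sdiff_singleton (E : Set (Sym2 α)) (u v x y : P) :
    graphOn P (insert s(x.1, y.1) (E \ {s(u.1, v.1)})) =
      (graphOn P E).deleteEdges {s(u, v)} ⊔ SimpleGraph.edge x y := by
  ext a b
  simp only [graphOn_adj, SimpleGraph.sup_adj, SimpleGraph.deleteEdges_adj, SimpleGraph.edge_adj,
    Set.mem_insert_iff, Set.mem_sdiff, Set.mem_singleton_iff, Sym2.eq_iff, ne_eq, Subtype.ext_iff]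
  tauto

namespace IsSpanningTree

variable [DecidableEq α] {E E' : Finset (Sym2 α)}

theorem insert_erase (hE : IsSpanningTree P E) {u v x y : P}
    (hxy : ¬((graphOn P ↑E).deleteEdges {s(u, v)}).Reachable x y) :
    IsSpanningTree P (insert s(x.1, y.1) (E.erase s(u.1, v.1))) where
  subset_completeEdges := by
    have hne : x ≠ y := by
      rintro rfl
      exact hxy .rfl
    rw [Finset.coe_insert, Finset.coe_erase]
    exact Set.insert_subset (mk_mem_completeEdges hne)
      (Set.sdiff_subset.trans hE.subset_completeEdges)
  isTree := by
    rw [Finset.coe_insert, Finset.coe_erase, graphOn_insert_sdiff_singleton]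
    exact isTree_deleteEdges_sup_edge_of_not_reachable hE.isTree hxy

theorem exists_symmetric_exchange (hE : IsSpanningTree P E) (hE' : IsSpanningTree P E')
    {e : Sym2 α} (he : e ∈ E) (he' : e ∉ E') :
    ∃ f ∈ E', f ∉ E ∧ IsSpanningTree P (insert f (E.erase e)) ∧
      IsSpanningTree P (insert e (E'.erase f)) := by
  obtain ⟨hdiag, hmem⟩ := hE.subset_completeEdges he
  induction e using Sym2.ind with | _ a b
  lift a to P using hmem a (Sym2.mem_mk_left _ _)
  lift b to P using hmem b (Sym2.mem_mk_right _ _)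
  have hab : (graphOn P ↑E).Adj a b := graphOn_adj.2 ⟨he, by rintro rfl; exact hdiag rfl⟩
  have hbridge : ¬((graphOn P ↑E).deleteEdges {s(a, b)}).Reachable a b :=
    SimpleGraph.isAcyclic_iff_forall_adj_isBridge.1 hE.isTree.isAcyclic hab
  obtain ⟨x, y, hadj, hxy, hxy'⟩ := exists_adj_not_reachable_deleteEdges hE'.isTree.isAcyclic
    (hE'.isTree.connected a b) hbridge
  refine ⟨s(x.1, y.1), (graphOn_adj.1 hadj).1, fun hf ↦ hxy ?_, hE.insert_erase hxy,
    hE'.insert_erase hxy'⟩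
  have hne : s(x, y) ≠ s(a, b) := by
    intro h
    have hval : s(x.1, y.1) = s(a.1, b.1) := congrArg (Sym2.map Subtype.val) h
    exact he' (hval ▸ (graphOn_adj.1 hadj).1)
  exact SimpleGraph.Adj.reachable
    (SimpleGraph.deleteEdges_adj.2 ⟨graphOn_adj.2 ⟨hf, hadj.ne⟩, hne⟩)

end IsSpanningTree

variable {M : Type*} [AddCommMonoid M] [PartialOrder M]

/-- `E` is a minimum spanning tree of the complete graph on `P` for the edge weights `w`. Both
Euclidean and `F`-minimum spanning trees are instances of this notion. -/
structure IsMinSpanningTree (w : Sym2 α → M) (P : Set α) (E : Finset (Sym2 α)) : Prop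
    extends IsSpanningTree P E where
  sum_le : ∀ E', IsSpanningTree P E' → ∑ e ∈ E, w e ≤ ∑ e ∈ E', w e

variable [IsOrderedCancelAddMonoid M]

theorem IsMinSpanningTree.weight_le_of_insert_erase [DecidableEq α] {w : Sym2 α → M}
    {E : Finset (Sym2 α)} (hE : IsMinSpanningTree w P E) {e f : Sym2 α} (he : e ∈ E) (hf : f ∉ E)
    (hexch : IsSpanningTree P (insert f (E.erase e))) : w e ≤ w f := by
  have hsum := hE.sum_le _ hexch
  rw [← Finset.add_sum_erase E w he, Finset.sum_insert (mt Finset.mem_of_mem_erase hf)] at hsum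
  exact le_of_add_le_add_right hsum

theorem fmst_subset_F_union_emst_general {w wF : Sym2 α → M} (hw : Set.InjOn w (completeEdges P))
    {F : Set (Sym2 α)} (hle : ∀ e ∈ F, wF e ≤ w e) (heq : ∀ e ∉ F, wF e = w e)
    {T T' : Finset (Sym2 α)} (hT : IsMinSpanningTree wF P T) (hT' : IsMinSpanningTree w P T') :
    ∀ e ∈ T, e ∈ F ∨ e ∈ T' := by
  classical
  intro e heT
  by_contra! ⟨heF, heT'⟩
  obtain ⟨f, hfT', hfT, hexch, hexch'⟩ :=
    hT.toIsSpanningTree.exists_symmetric_exchange hT'.toIsSpanningTree heT heT'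
  have hfe : w f ≤ w e := hT'.weight_le_of_insert_erase hfT' heT' hexch'
  have hef : w e ≤ w f := calc
    w e = wF e := (heq e heF).symm
    _ ≤ wF f := hT.weight_le_of_insert_erase heT hfT hexch
    _ ≤ w f := if hfF : f ∈ F then hle f hfF else (heq f hfF).le
  have : e = f := hw (hT.subset_completeEdges heT) (hT'.subset_completeEdges hfT')
    (hef.antisymm hfe)
  exact hfT (this ▸ heT)

end SpanningTree

theorem edgeLen_nonneg (e : Sym2 Pt) : 0 ≤ edgeLen e := by
  induction e using Sym2.ind with | _ u v
  exact dist_nonneg (x := u) (y := v)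

theorem DistinctDistances.injOn_edgeLen {P : Finset Pt} (hP : DistinctDistances P) :
    Set.InjOn edgeLen (completeEdges ↑P) := by
  rintro ⟨p, q⟩ ⟨hpq, hmem⟩ ⟨u, v⟩ ⟨huv, hmem'⟩ hlen
  exact hP p (hmem p (Sym2.mem_mk_left p q)) q (hmem q (Sym2.mem_mk_right p q))
    u (hmem' u (Sym2.mem_mk_left u v)) v (hmem' v (Sym2.mem_mk_right u v)) hpq huv hlen

theorem IsEMST.isMinSpanningTree {P : Finset Pt} {T : Finset (Sym2 Pt)} (hT : IsEMST P T) :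
    IsMinSpanningTree edgeLen ↑P T :=
  ⟨⟨hT.1, hT.2.1⟩, fun E hE ↦ hT.2.2 E hE.subset_completeEdges hE.isTree⟩

theorem IsFMST.isMinSpanningTree {F : Finset (Sym2 Pt)} {P : Finset Pt} {T : Finset (Sym2 Pt)}
    (hT : IsFMST F P T) :
    IsMinSpanningTree (fun e ↦ if e ∈ F then 0 else edgeLen e) ↑P T :=
  ⟨⟨hT.1, hT.2.1⟩, fun E hE ↦ hT.2.2 E hE.subset_completeEdges hE.isTree⟩

/-- If all pairwise distances of `P` are distinct, `F` is a set of
unordered pairs of distinct points of `P`, `T` is an `F`-minimum spanning tree of `P`,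
and `T'` is the (unique) Euclidean minimum spanning tree of `P`, then every edge of `T`
belongs to `F` or to `T'`. -/
theorem fmst_subset_F_union_emst (P : Finset Pt) (hdist : DistinctDistances P)
    (F : Finset (Sym2 Pt)) (hF : ∀ e ∈ F, ¬ e.IsDiag ∧ ∀ p ∈ e, p ∈ P)
    (T : Finset (Sym2 Pt)) (hT : IsFMST F P T)
    (T' : Finset (Sym2 Pt)) (hT' : IsEMST P T') :
    ∀ e ∈ T, e ∈ F ∨ e ∈ T' := by
  exact fmst_subset_F_union_emst_general hdist.injOn_edgeLen (F := ↑F)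
    (fun e he ↦ (if_pos he).trans_le (edgeLen_nonneg e)) (fun _ he ↦ if_neg he)
    hT.isMinSpanningTree hT'.isMinSpanningTree
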